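/- Let G and H be abelian groups with tiles T ⊂ G and A ⊂ B ⊂ H. Suppose G^k × H^ℓ × B^d is (T^{×k}, A^{×(ℓ+d)})-tilable, and G^u × H^v is (T^{×u}, B^{×v})-tilable. Then G^{du+k} × H^{dv+ℓ} is (T^{×(du+k)}, A^{×(dv+ℓ)})-tilable. -/

import Mathlib

universe u

def IsCopyD {ι : Type*} [DecidableEq ι] {G : ι → Type*}
    [∀ i, AddCommGroup (G i)] (T : ∀ i, Set (G i))
    (S : Set (∀ i, G i)) : Prop :=
  ∃ (j : ι) (y : ∀ i, G i),
    S = {z | ∃ t ∈ T j, z = Function.update y j (y j + t)}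

def TilableD {ι : Type*} [DecidableEq ι] {G : ι → Type*}
    [∀ i, AddCommGroup (G i)] (T : ∀ i, Set (G i))
    (X : Set (∀ i, G i)) : Prop :=
  ∃ P : Set (Set (∀ i, G i)),
    (∀ S ∈ P, IsCopyD T S) ∧ P.PairwiseDisjoint id ∧ ⋃₀ P = X

instance sumElimAddCommGroup {α β : Type*} (F : α → Type u) (G : β → Type u)
    [∀ a, AddCommGroup (F a)] [∀ b, AddCommGroup (G b)] :
    ∀ i : α ⊕ β, AddCommGroup (Sum.elim F G i) := fun i =>
  match i with
  | .inl a => inferInstanceAs (AddCommGroup (F a))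
  | .inr b => inferInstanceAs (AddCommGroup (G b))

namespace TT

set_option linter.unusedSectionVars false

open Function

/-- Copies of tiles in `G^ι × H^κ`. -/
def Cop {ι κ : Type*} [DecidableEq ι] [DecidableEq κ] {G H : Type*}
    [AddCommGroup G] [AddCommGroup H] (T : Set G) (A : Set H)
    (S : Set ((ι → G) × (κ → H))) : Prop :=
  (∃ (j : ι) (x : ι → G) (z : κ → H), S = {p | ∃ t ∈ T, p = (update x j (x j + t), z)}) ∨
  (∃ (j : κ) (x : ι → G) (z : κ → H), S = {p | ∃ t ∈ A, p = (x, update z j (z j + t))})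

/-- Pointwise form of tilability. -/
def Til {α : Type*} (C : Set α → Prop) (X : Set α) : Prop :=
  ∃ F : α → Set α, ∀ x ∈ X, x ∈ F x ∧ F x ⊆ X ∧ C (F x) ∧ ∀ x' ∈ F x, F x' = F x

theorem tilableD_iff {ι : Type*} [DecidableEq ι] {G : ι → Type*}
    [∀ i, AddCommGroup (G i)] (T : ∀ i, Set (G i)) (X : Set (∀ i, G i)) :
    TilableD T X ↔ Til (IsCopyD T) X := by
  constructor
  · rintro ⟨P, hP, hd, rfl⟩
    have : ∀ x : (∀ i, G i), ∃ S : Set (∀ i, G i), x ∈ ⋃₀ P → S ∈ P ∧ x ∈ S := by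
      intro x
      by_cases hx : x ∈ ⋃₀ P
      · obtain ⟨S, hS, hxS⟩ := hx
        exact ⟨S, fun _ => ⟨hS, hxS⟩⟩
      · exact ⟨∅, fun h => absurd h hx⟩
    choose F hF using this
    refine ⟨F, fun x hx => ⟨(hF x hx).2, Set.subset_sUnion_of_mem (hF x hx).1,
      hP _ (hF x hx).1, fun x' hx' => ?_⟩⟩
    have hx'P : x' ∈ ⋃₀ P := ⟨F x, (hF x hx).1, hx'⟩
    exact hd.elim_set (hF x' hx'P).1 (hF x hx).1 x' (hF x' hx'P).2 hx'
  · rintro ⟨F, hF⟩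
    refine ⟨F '' X, ?_, ?_, ?_⟩
    · rintro _ ⟨x, hx, rfl⟩
      exact (hF x hx).2.2.1
    · rintro _ ⟨x, hx, rfl⟩ _ ⟨y, hy, rfl⟩ hne
      refine Set.disjoint_left.2 fun z hz hz' => hne ?_
      rw [← (hF x hx).2.2.2 z hz, ← (hF y hy).2.2.2 z hz']
    · ext x
      constructor
      · rintro ⟨_, ⟨y, hy, rfl⟩, hx⟩
        exact (hF y hy).2.1 hx
      · intro hx
        exact ⟨F x, ⟨x, hx, rfl⟩, (hF x hx).1⟩

section transport

variable {I J ι κ : Type} [DecidableEq I] [DecidableEq J] [DecidableEq ι] [DecidableEq κ]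
  {G H : Type u} [AddCommGroup G] [AddCommGroup H] (e₁ : I ≃ ι) (e₂ : J ≃ κ)

/-- Coordinates. -/
def toP (z : ∀ i : ι ⊕ κ, Sum.elim (fun _ : ι => G) (fun _ : κ => H) i) :
    (I → G) × (J → H) :=
  (fun i => z (.inl (e₁ i)), fun j => z (.inr (e₂ j)))

/-- Inverse coordinates. -/
def ofP (p : (I → G) × (J → H)) :
    ∀ i : ι ⊕ κ, Sum.elim (fun _ : ι => G) (fun _ : κ => H) i := fun i =>
  match i with
  | .inl i => p.1 (e₁.symm i)
  | .inr j => p.2 (e₂.symm j)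

theorem toP_ofP (p : (I → G) × (J → H)) : toP e₁ e₂ (ofP e₁ e₂ p) = p := by
  simp [toP, ofP]

theorem ofP_toP (z : ∀ i : ι ⊕ κ, Sum.elim (fun _ : ι => G) (fun _ : κ => H) i) :
    ofP e₁ e₂ (toP e₁ e₂ z) = z := by
  funext i
  rcases i with i | i
  · show z (.inl (e₁ (e₁.symm i))) = _
    rw [Equiv.apply_symm_apply]
  · show z (.inr (e₂ (e₂.symm i))) = _
    rw [Equiv.apply_symm_apply]

theorem toP_update_inl (z : ∀ i : ι ⊕ κ, Sum.elim (fun _ : ι => G) (fun _ : κ => H) i)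
    (j : ι) (a : G) :
    toP e₁ e₂ (update z (.inl j) a) =
      (update (toP e₁ e₂ z).1 (e₁.symm j) a, (toP e₁ e₂ z).2) := by
  obtain ⟨j, rfl⟩ := e₁.surjective j
  rw [Equiv.symm_apply_apply]
  refine Prod.ext (funext fun i => ?_) (funext fun i => ?_)
  · by_cases h : i = j
    · subst h
      exact (update_self (β := Sum.elim (fun _ : ι => G) (fun _ : κ => H))
        (Sum.inl (e₁ i)) a z).trans (update_self i a (toP e₁ e₂ z).1).symm
    · have h' : (Sum.inl (e₁ i) : ι ⊕ κ) ≠ Sum.inl (e₁ j) := by simpa using h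
      exact (update_of_ne (β := Sum.elim (fun _ : ι => G) (fun _ : κ => H))
        h' a z).trans (update_of_ne (β := fun _ => G) h a (toP e₁ e₂ z).1).symm
  · exact update_of_ne (β := Sum.elim (fun _ : ι => G) (fun _ : κ => H))
      (a := Sum.inr (e₂ i)) (a' := Sum.inl (e₁ j)) (by simp) a z

theorem toP_update_inr (z : ∀ i : ι ⊕ κ, Sum.elim (fun _ : ι => G) (fun _ : κ => H) i)
    (j : κ) (a : H) :
    toP e₁ e₂ (update z (.inr j) a) =
      ((toP e₁ e₂ z).1, update (toP e₁ e₂ z).2 (e₂.symm j) a) := by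
  obtain ⟨j, rfl⟩ := e₂.surjective j
  rw [Equiv.symm_apply_apply]
  refine Prod.ext (funext fun i => ?_) (funext fun i => ?_)
  · exact update_of_ne (β := Sum.elim (fun _ : ι => G) (fun _ : κ => H))
      (a := Sum.inl (e₁ i)) (a' := Sum.inr (e₂ j)) (by simp) a z
  · by_cases h : i = j
    · subst h
      exact (update_self (β := Sum.elim (fun _ : ι => G) (fun _ : κ => H))
        (Sum.inr (e₂ i)) a z).trans (update_self i a (toP e₁ e₂ z).2).symm
    · have h' : (Sum.inr (e₂ i) : ι ⊕ κ) ≠ Sum.inr (e₂ j) := by simpa using h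
      exact (update_of_ne (β := Sum.elim (fun _ : ι => G) (fun _ : κ => H))
        h' a z).trans (update_of_ne (β := fun _ => H) h a (toP e₁ e₂ z).2).symm

theorem ofP_eq_iff (p : (I → G) × (J → H))
    (z : ∀ i : ι ⊕ κ, Sum.elim (fun _ : ι => G) (fun _ : κ => H) i) :
    ofP e₁ e₂ p = z ↔ p = toP e₁ e₂ z :=
  ⟨fun h => by rw [← h, toP_ofP], fun h => by rw [h, ofP_toP]⟩

theorem cop_of_copyD (T : Set G) (A : Set H)
    (𝒯 : ∀ i : ι ⊕ κ, Set (Sum.elim (fun _ : ι => G) (fun _ : κ => H) i))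
    (hT : ∀ i, 𝒯 (.inl i) = T) (hA : ∀ i, 𝒯 (.inr i) = A)
    (S : Set (∀ i : ι ⊕ κ, Sum.elim (fun _ : ι => G) (fun _ : κ => H) i))
    (hS : IsCopyD 𝒯 S) : Cop T A (ofP e₁ e₂ ⁻¹' S) := by
  obtain ⟨j, y, rfl⟩ := hS
  rcases j with j | j
  · refine Or.inl ⟨e₁.symm j, (toP e₁ e₂ y).1, (toP e₁ e₂ y).2, ?_⟩
    ext p
    simp only [Set.mem_preimage, Set.mem_ofPred_eq, hT, ofP_eq_iff]
    refine exists_congr fun t => and_congr_right fun _ => ?_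
    erw [toP_update_inl]
    have : (toP e₁ e₂ y).1 (e₁.symm j) = y (.inl j) := by
      show y (.inl (e₁ (e₁.symm j))) = _
      rw [Equiv.apply_symm_apply]
    rw [this]
    rfl
  · refine Or.inr ⟨e₂.symm j, (toP e₁ e₂ y).1, (toP e₁ e₂ y).2, ?_⟩
    ext p
    simp only [Set.mem_preimage, Set.mem_ofPred_eq, hA, ofP_eq_iff]
    refine exists_congr fun t => and_congr_right fun _ => ?_
    erw [toP_update_inr]
    have : (toP e₁ e₂ y).2 (e₂.symm j) = y (.inr j) := by
      show y (.inr (e₂ (e₂.symm j))) = _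
      rw [Equiv.apply_symm_apply]
    rw [this]
    rfl

theorem copyD_of_cop (T : Set G) (A : Set H)
    (𝒯 : ∀ i : ι ⊕ κ, Set (Sum.elim (fun _ : ι => G) (fun _ : κ => H) i))
    (hT : ∀ i, 𝒯 (.inl i) = T) (hA : ∀ i, 𝒯 (.inr i) = A)
    (S : Set ((I → G) × (J → H)))
    (hS : Cop T A S) : IsCopyD 𝒯 (toP e₁ e₂ ⁻¹' S) := by
  rcases hS with ⟨j, x, z, rfl⟩ | ⟨j, x, z, rfl⟩
  · refine ⟨.inl (e₁ j), ofP e₁ e₂ (x, z), ?_⟩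
    ext p
    simp only [Set.mem_preimage, Set.mem_ofPred_eq, hT]
    refine exists_congr fun t => and_congr_right fun _ => ?_
    rw [← (ofP_toP e₁ e₂ p), ofP_eq_iff, toP_ofP]
    erw [toP_update_inl]
    rw [toP_ofP]
    have : (ofP e₁ e₂ (x, z)) (.inl (e₁ j)) = x j := by
      show x (e₁.symm (e₁ j)) = _
      rw [Equiv.symm_apply_apply]
    rw [this, Equiv.symm_apply_apply]
    rfl
  · refine ⟨.inr (e₂ j), ofP e₁ e₂ (x, z), ?_⟩
    ext p
    simp only [Set.mem_preimage, Set.mem_ofPred_eq, hA]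
    refine exists_congr fun t => and_congr_right fun _ => ?_
    rw [← (ofP_toP e₁ e₂ p), ofP_eq_iff, toP_ofP]
    erw [toP_update_inr]
    rw [toP_ofP]
    have : (ofP e₁ e₂ (x, z)) (.inr (e₂ j)) = z j := by
      show z (e₂.symm (e₂ j)) = _
      rw [Equiv.symm_apply_apply]
    rw [this, Equiv.symm_apply_apply]
    rfl

theorem til_of_tilableD (T : Set G) (A : Set H)
    (𝒯 : ∀ i : ι ⊕ κ, Set (Sum.elim (fun _ : ι => G) (fun _ : κ => H) i))
    (hT : ∀ i, 𝒯 (.inl i) = T) (hA : ∀ i, 𝒯 (.inr i) = A)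
    (X : Set (∀ i : ι ⊕ κ, Sum.elim (fun _ : ι => G) (fun _ : κ => H) i))
    (h : TilableD 𝒯 X) : Til (Cop T A) (ofP e₁ e₂ ⁻¹' X) := by
  obtain ⟨F, hF⟩ := (tilableD_iff _ _).1 h
  refine ⟨fun p => ofP e₁ e₂ ⁻¹' F (ofP e₁ e₂ p), fun p hp => ?_⟩
  obtain ⟨h1, h2, h3, h4⟩ := hF _ hp
  refine ⟨h1, fun q hq => h2 hq, cop_of_copyD e₁ e₂ T A 𝒯 hT hA _ h3, fun q hq => ?_⟩
  show ofP e₁ e₂ ⁻¹' F (ofP e₁ e₂ q) = _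
  rw [h4 _ hq]

theorem tilableD_of_til (e₁ : I ≃ ι) (e₂ : J ≃ κ) (T : Set G) (A : Set H)
    (𝒯 : ∀ i : ι ⊕ κ, Set (Sum.elim (fun _ : ι => G) (fun _ : κ => H) i))
    (hT : ∀ i, 𝒯 (.inl i) = T) (hA : ∀ i, 𝒯 (.inr i) = A)
    (h : Til (Cop T A) (Set.univ : Set ((I → G) × (J → H)))) : TilableD 𝒯 Set.univ := by
  obtain ⟨F, hF⟩ := h
  refine (tilableD_iff _ _).2 ⟨fun p => toP e₁ e₂ ⁻¹' F (toP e₁ e₂ p), fun p _ => ?_⟩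
  obtain ⟨h1, h2, h3, h4⟩ := hF (toP e₁ e₂ p) trivial
  refine ⟨h1, fun q hq => trivial, copyD_of_cop e₁ e₂ T A 𝒯 hT hA _ h3, fun q hq => ?_⟩
  show toP e₁ e₂ ⁻¹' F (toP e₁ e₂ q) = _
  rw [h4 _ hq]

end transport

section main

variable {D U V K L : Type} [DecidableEq D] [DecidableEq U] [DecidableEq V] [DecidableEq K]
  [DecidableEq L] {G H : Type u} [AddCommGroup G] [AddCommGroup H]

/-- The `i`-th block of a point. -/
def blk (p : ((D × U) ⊕ K → G) × ((D × V) ⊕ L → H)) (i : D) : (U → G) × (V → H) :=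
  (fun a => p.1 (.inl (i, a)), fun b => p.2 (.inl (i, b)))

/-- Assemble a point from blocks. -/
def asm (q : D → (U → G) × (V → H)) (g : K → G) (h : L → H) :
    ((D × U) ⊕ K → G) × ((D × V) ⊕ L → H) :=
  (Sum.elim (fun a => (q a.1).1 a.2) g, Sum.elim (fun a => (q a.1).2 a.2) h)

theorem blk_asm (q : D → (U → G) × (V → H)) (g : K → G) (h : L → H) :
    blk (asm q g h) = q := rfl

theorem asm_blk (p : ((D × U) ⊕ K → G) × ((D × V) ⊕ L → H)) :
    asm (blk p) (fun i => p.1 (.inr i)) (fun i => p.2 (.inr i)) = p := by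
  refine Prod.ext (funext fun i => ?_) (funext fun i => ?_) <;> rcases i with i | i <;> rfl

theorem asm_update_fst (q : D → (U → G) × (V → H)) (g : K → G) (h : L → H) (i : D) (j : U)
    (x : U → G) (z : V → H) (a : G) :
    asm (update q i (update x j a, z)) g h =
      (update (asm (update q i (x, z)) g h).1 (.inl (i, j)) a,
        (asm (update q i (x, z)) g h).2) := by
  refine Prod.ext (funext fun s => ?_) (funext fun s => ?_) <;> rcases s with ⟨s, t⟩ | s
  · by_cases hs : s = i
    · subst hs
      simp [asm, update_apply]
    · simp [asm, hs]
  · simp [asm]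
  · by_cases hs : s = i
    · subst hs
      simp [asm]
    · simp [asm, hs]
  · simp [asm]

theorem asm_update_g (q : D → (U → G) × (V → H)) (g : K → G) (h : L → H) (j : K) (a : G) :
    asm q (update g j a) h = (update (asm q g h).1 (.inr j) a, (asm q g h).2) := by
  refine Prod.ext (funext fun s => ?_) (funext fun s => ?_) <;> rcases s with ⟨s, t⟩ | s
  · have hs : (Sum.inl (s, t) : (D × U) ⊕ K) ≠ Sum.inr j := by simp
    simp only [asm, Sum.elim_inl, update_of_ne hs]
  · by_cases hs : s = j
    · subst hs
      simp only [asm, Sum.elim_inr, update_self]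
    · have hs' : (Sum.inr s : (D × U) ⊕ K) ≠ Sum.inr j := by simpa using hs
      simp only [asm, Sum.elim_inr, update_of_ne hs, update_of_ne hs']
  · rfl
  · rfl

/-- Insert the extra coordinates along the chosen directions. -/
def psi (j : D → V) (x : D → U → G) (y : D → V → H) (w : (K → G) × (L ⊕ D → H)) :
    ((D × U) ⊕ K → G) × ((D × V) ⊕ L → H) :=
  asm (fun i => (x i, update (y i) (j i) (y i (j i) + w.2 (.inr i)))) w.1
    (fun l => w.2 (.inl l))

/-- Read the extra coordinates. -/
def phi (j : D → V) (y : D → V → H) (p : ((D × U) ⊕ K → G) × ((D × V) ⊕ L → H)) :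
    (K → G) × (L ⊕ D → H) :=
  (fun k => p.1 (.inr k),
    Sum.elim (fun l => p.2 (.inr l)) (fun i => (blk p i).2 (j i) - y i (j i)))

theorem phi_psi (j : D → V) (x : D → U → G) (y : D → V → H) (w : (K → G) × (L ⊕ D → H)) :
    phi j y (psi j x y w) = w := by
  refine Prod.ext rfl (funext fun s => ?_)
  rcases s with s | s
  · rfl
  · simp [phi, psi, blk_asm]

theorem psi_phi (j : D → V) (x : D → U → G) (y : D → V → H)
    (p : ((D × U) ⊕ K → G) × ((D × V) ⊕ L → H)) (B : Set H)
    (hp : ∀ i, ∃ t ∈ B, blk p i = (x i, update (y i) (j i) (y i (j i) + t))) :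
    psi j x y (phi j y p) = p := by
  conv_rhs => rw [← asm_blk p]
  unfold psi
  have : (fun i => (x i, update (y i) (j i) (y i (j i) + (phi j y p).2 (.inr i)))) = blk p := by
    funext i
    obtain ⟨t, -, ht⟩ := hp i
    simp [phi, ht]
  rw [this]
  rfl

theorem cop_psi (T : Set G) (A : Set H) (j : D → V) (x : D → U → G) (y : D → V → H)
    (S : Set ((K → G) × (L ⊕ D → H))) (hS : Cop T A S) :
    Cop T A (psi j x y '' S) := by
  rcases hS with ⟨i, g, h, rfl⟩ | ⟨i | i, g, h, rfl⟩
  · refine Or.inl ⟨.inr i, (psi j x y (g, h)).1, (psi j x y (g, h)).2, ?_⟩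
    have key : ∀ a, psi j x y (update g i (g i + a), h) =
        (update (psi j x y (g, h)).1 (.inr i) ((psi j x y (g, h)).1 (.inr i) + a),
          (psi j x y (g, h)).2) := fun a => asm_update_g ..
    ext p
    constructor
    · rintro ⟨_, ⟨t, ht, rfl⟩, rfl⟩
      exact ⟨t, ht, key t⟩
    · rintro ⟨t, ht, rfl⟩
      exact ⟨_, ⟨t, ht, rfl⟩, key t⟩
  · refine Or.inr ⟨.inr i, (psi j x y (g, h)).1, (psi j x y (g, h)).2, ?_⟩
    have key : ∀ a, psi j x y (g, update h (.inl i) (h (.inl i) + a)) =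
        ((psi j x y (g, h)).1,
          update (psi j x y (g, h)).2 (.inr i) ((psi j x y (g, h)).2 (.inr i) + a)) := by
      intro a
      refine Prod.ext (funext fun s => ?_) (funext fun s => ?_) <;> rcases s with ⟨s, t⟩ | s <;>
        simp [psi, asm, update_apply]
    ext p
    constructor
    · rintro ⟨_, ⟨t, ht, rfl⟩, rfl⟩
      exact ⟨t, ht, key t⟩
    · rintro ⟨t, ht, rfl⟩
      exact ⟨_, ⟨t, ht, rfl⟩, key t⟩
  · refine Or.inr ⟨.inl (i, j i), (psi j x y (g, h)).1, (psi j x y (g, h)).2, ?_⟩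
    have key : ∀ a, psi j x y (g, update h (.inr i) (h (.inr i) + a)) =
        ((psi j x y (g, h)).1, update (psi j x y (g, h)).2 (.inl (i, j i))
          ((psi j x y (g, h)).2 (.inl (i, j i)) + a)) := by
      intro a
      refine Prod.ext (funext fun s => ?_) (funext fun s => ?_) <;> rcases s with ⟨s, t⟩ | s
      · simp [psi, asm]
      · simp [psi, asm]
      · by_cases hs : s = i
        · subst hs
          by_cases ht : t = j s
          · subst ht
            simp [psi, asm, add_assoc]
          · simp [psi, asm, ht]
        · simp [psi, asm, hs]
      · simp [psi, asm]
    ext p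
    constructor
    · rintro ⟨_, ⟨t, ht, rfl⟩, rfl⟩
      exact ⟨t, ht, key t⟩
    · rintro ⟨t, ht, rfl⟩
      exact ⟨_, ⟨t, ht, rfl⟩, key t⟩

/-- `T`-type copy. -/
def IsT (T : Set G) (S : Set ((U → G) × (V → H))) : Prop :=
  ∃ (j : U) (x : U → G) (z : V → H), S = {p | ∃ t ∈ T, p = (update x j (x j + t), z)}

theorem cop_asm (T : Set G) (A : Set H) (q : D → (U → G) × (V → H)) (g : K → G) (h : L → H)
    (i : D) (S : Set ((U → G) × (V → H))) (hS : IsT T S) :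
    Cop T A ((fun s => asm (update q i s) g h) '' S) := by
  obtain ⟨j, x, z, rfl⟩ := hS
  refine Or.inl ⟨.inl (i, j), (asm (update q i (x, z)) g h).1,
    (asm (update q i (x, z)) g h).2, ?_⟩
  have key : ∀ a, asm (update q i (update x j (x j + a), z)) g h =
      (update (asm (update q i (x, z)) g h).1 (.inl (i, j))
        ((asm (update q i (x, z)) g h).1 (.inl (i, j)) + a),
        (asm (update q i (x, z)) g h).2) := by
    intro a
    rw [asm_update_fst]
    simp only [asm, Sum.elim_inl, update_self]
  ext p
  constructor
  · rintro ⟨_, ⟨t, ht, rfl⟩, rfl⟩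
    exact ⟨t, ht, key t⟩
  · rintro ⟨t, ht, rfl⟩
    exact ⟨_, ⟨t, ht, rfl⟩, key t⟩

open Classical in
theorem main (T : Set G) (A B : Set H)
    (h1 : Til (Cop T A) {w : (K → G) × (L ⊕ D → H) | ∀ i, w.2 (.inr i) ∈ B})
    (h2 : Til (Cop T B) (Set.univ : Set ((U → G) × (V → H)))) :
    Til (Cop T A) (Set.univ : Set (((D × U) ⊕ K → G) × ((D × V) ⊕ L → H))) := by
  obtain ⟨F₁, hF₁⟩ := h1
  obtain ⟨F₂, hF₂⟩ := h2
  -- representatives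
  have hrep : ∀ f : D → Set ((U → G) × (V → H)), (∀ i, Cop T B (f i) ∧ ¬ IsT T (f i)) →
      ∃ r : (D → V) × (D → U → G) × (D → V → H), ∀ i,
        f i = {p | ∃ t ∈ B, p = (r.2.1 i, update (r.2.2 i) (r.1 i) (r.2.2 i (r.1 i) + t))} := by
    intro f hf
    have : ∀ i, ∃ (j : V) (x : U → G) (z : V → H),
        f i = {p | ∃ t ∈ B, p = (x, update z j (z j + t))} :=
      fun i => (hf i).1.resolve_left (hf i).2
    choose j x z hr using this
    exact ⟨(j, x, z), hr⟩
  choose r hr using hrep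
  have hsel : ∀ f : D → Set ((U → G) × (V → H)), (∃ i, IsT T (f i)) → ∃ i, IsT T (f i) :=
    fun _ h => h
  choose sel hsel using hsel
  let f : (((D × U) ⊕ K → G) × ((D × V) ⊕ L → H)) → D → Set ((U → G) × (V → H)) :=
    fun p i => F₂ (blk p i)
  have hc : ∀ p, (¬ ∃ i, IsT T (f p i)) → ∀ i, Cop T B (f p i) ∧ ¬ IsT T (f p i) :=
    fun p h i => ⟨(hF₂ _ trivial).2.2.1, fun hi => h ⟨i, hi⟩⟩
  let F : (((D × U) ⊕ K → G) × ((D × V) ⊕ L → H)) →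
      Set (((D × U) ⊕ K → G) × ((D × V) ⊕ L → H)) := fun p =>
    if h : ∃ i, IsT T (f p i) then
      (fun s => asm (update (blk p) (sel (f p) h) s) (fun i => p.1 (.inr i))
        (fun i => p.2 (.inr i))) '' f p (sel (f p) h)
    else psi (r (f p) (hc p h)).1 (r (f p) (hc p h)).2.1 (r (f p) (hc p h)).2.2 '' F₁ (phi (r (f p) (hc p h)).1 (r (f p) (hc p h)).2.2 p)
  refine ⟨F, fun p _ => ?_⟩
  by_cases h : ∃ i, IsT T (f p i)
  · have hFp : F p = (fun s => asm (update (blk p) (sel (f p) h) s) (fun i => p.1 (.inr i))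
        (fun i => p.2 (.inr i))) '' f p (sel (f p) h) := dif_pos h
    refine ⟨?_, Set.subset_univ _, ?_, ?_⟩
    · rw [hFp]
      refine ⟨blk p (sel (f p) h), (hF₂ _ trivial).1, ?_⟩
      simp only [update_eq_self]
      exact asm_blk p
    · rw [hFp]
      exact cop_asm T A _ _ _ _ _ (hsel _ h)
    · intro p' hp'
      rw [hFp] at hp'
      obtain ⟨s, hs, rfl⟩ := hp'
      set p' := asm (update (blk p) (sel (f p) h) s) (fun i => p.1 (.inr i))
        (fun i => p.2 (.inr i)) with hp'
      have hb : blk p' = update (blk p) (sel (f p) h) s := rfl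
      have hf : f p' = f p := by
        funext i
        show F₂ (blk p' i) = F₂ (blk p i)
        rw [hb]
        by_cases hi : i = sel (f p) h
        · rw [hi, update_self]
          exact (hF₂ _ trivial).2.2.2 s hs
        · rw [update_of_ne hi]
      have h' : ∃ i, IsT T (f p' i) := hf ▸ h
      have hs' : sel (f p') h' = sel (f p) h := by
        congr 1
      have hFp' : F p' = (fun s => asm (update (blk p') (sel (f p') h') s)
          (fun i => p'.1 (.inr i)) (fun i => p'.2 (.inr i))) '' f p' (sel (f p') h') := dif_pos h'
      rw [hFp, hFp', hs', hf, hb]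
      simp only [update_idem]
      rfl
  · have hFp : F p = psi (r (f p) (hc p h)).1 (r (f p) (hc p h)).2.1 (r (f p) (hc p h)).2.2 ''
        F₁ (phi (r (f p) (hc p h)).1 (r (f p) (hc p h)).2.2 p) := dif_neg h
    have hrf := hr (f p) (hc p h)
    have hblk : ∀ i, ∃ t ∈ B, blk p i = ((r (f p) (hc p h)).2.1 i,
        update ((r (f p) (hc p h)).2.2 i) ((r (f p) (hc p h)).1 i) ((r (f p) (hc p h)).2.2 i ((r (f p) (hc p h)).1 i) + t)) := by
      intro i
      have : blk p i ∈ f p i := (hF₂ _ trivial).1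
      rw [hrf i] at this
      exact this
    have hX : ∀ i, (phi (r (f p) (hc p h)).1 (r (f p) (hc p h)).2.2 p).2 (.inr i) ∈ B := by
      intro i
      obtain ⟨t, ht, hti⟩ := hblk i
      simpa [phi, hti] using ht
    obtain ⟨a1, a2, a3, a4⟩ := hF₁ _ hX
    refine ⟨?_, Set.subset_univ _, ?_, ?_⟩
    · rw [hFp]
      exact ⟨_, a1, psi_phi _ _ _ p B hblk⟩
    · rw [hFp]
      exact cop_psi T A _ _ _ _ a3
    · intro p' hp'
      rw [hFp] at hp'
      obtain ⟨w, hw, hwp⟩ := hp'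
      have hwB := a2 hw
      have hf : f p' = f p := by
        funext i
        refine (hF₂ (blk p i) trivial).2.2.2 _ ?_
        show blk p' i ∈ f p i
        rw [hrf i, ← hwp]
        exact ⟨w.2 (.inr i), hwB i, rfl⟩
      have h' : ¬ ∃ i, IsT T (f p' i) := hf ▸ h
      have hFp' : F p' = psi (r (f p') (hc p' h')).1 (r (f p') (hc p' h')).2.1 (r (f p') (hc p' h')).2.2 ''
        F₁ (phi (r (f p') (hc p' h')).1 (r (f p') (hc p' h')).2.2 p') := dif_neg h'
      have hrr : r (f p') (hc p' h') = r (f p) (hc p h) := by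
        congr 1
      rw [hFp, hFp', hrr]
      have : phi (r (f p) (hc p h)).1 (r (f p) (hc p h)).2.2 p' = w := by
        rw [← hwp, phi_psi]
      rw [this, a4 w hw]

end main

end TT

/-- if `G^k × H^ℓ × B^d` is `(T^{×k}, A^{×(ℓ+d)})`-tilable and
`G^u × H^v` is `(T^{×u}, B^{×v})`-tilable, then `G^{du+k} × H^{dv+ℓ}` is
`(T^{×(du+k)}, A^{×(dv+ℓ)})`-tilable. -/
theorem tilingTransitive {G H : Type u} [AddCommGroup G] [AddCommGroup H]
    (T : Set G) (A B : Set H) (hAB : A ⊆ B)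
    (k ℓ d u v : ℕ)
    (h1 : TilableD (G := Sum.elim (fun _ : Fin k => G) fun _ : Fin (ℓ + d) => H)
            (fun i => match i with
              | .inl _ => T
              | .inr _ => A)
            {z | ∀ j : Fin (ℓ + d), ℓ ≤ (j : ℕ) → z (.inr j) ∈ B})
    (h2 : TilableD (G := Sum.elim (fun _ : Fin u => G) fun _ : Fin v => H)
            (fun i => match i with
              | .inl _ => T
              | .inr _ => B)
            Set.univ) :
    TilableD (G := Sum.elim (fun _ : Fin (d * u + k) => G)
                fun _ : Fin (d * v + ℓ) => H)
      (fun i => match i with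
        | .inl _ => T
        | .inr _ => A)
      Set.univ := by
  refine TT.tilableD_of_til ((Equiv.sumCongr finProdFinEquiv (Equiv.refl _)).trans finSumFinEquiv)
    ((Equiv.sumCongr finProdFinEquiv (Equiv.refl _)).trans finSumFinEquiv) T A _
    (fun _ => rfl) (fun _ => rfl)
    (TT.main (D := Fin d) (U := Fin u) (V := Fin v) (K := Fin k) (L := Fin ℓ) T A B ?_ ?_)
  · have := TT.til_of_tilableD (Equiv.refl (Fin k)) (finSumFinEquiv (m := ℓ) (n := d)) T A _
      (fun _ => rfl) (fun _ => rfl) _ h1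
    convert this using 1
    ext w
    constructor
    · intro hw j hj
      obtain ⟨s, rfl⟩ := finSumFinEquiv.surjective j
      rcases s with s | s
      · simp at hj
        omega
      · show w.2 (finSumFinEquiv.symm (finSumFinEquiv (.inr s))) ∈ B
        rw [Equiv.symm_apply_apply]
        exact hw s
    · intro hw i
      have h : w.2 (finSumFinEquiv.symm (finSumFinEquiv (.inr i))) ∈ B :=
        hw (finSumFinEquiv (.inr i)) (by simp)
      rwa [Equiv.symm_apply_apply] at h
  · exact TT.til_of_tilableD (Equiv.refl (Fin u)) (Equiv.refl (Fin v)) T B _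
      (fun _ => rfl) (fun _ => rfl) _ h2
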